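/- arXiv:1708.00766 — 6 statements merged into one kernel-verified Lean document; each statement's English description precedes it below -/
import Mathlib

section
/- For every integer radius r ≥ 1, the signum circle path of radius r satisfies: for every n with 0 ≤ n ≤ 2r−1, either (x_{n+1} = x_n − 1 and y_{n+1} = y_n) or (x_{n+1} = x_n and y_{n+1} = y_n + 1) (so consecutive points are nearest neighbours on the integer lattice ℤ², i.e. |x_{n+1} − x_n| + |y_{n+1} − y_n| = 1), and the path consisting of the 2r steps starting at (x_0, y_0) = (r, 0) ends at (x_{2r}, y_{2r}) = (0, r). -/
open Filter Finset Real

/-- The signum function of the paper: `-1` if `t ≤ 0` and `1` if `t > 0`. -/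
noncomputable def sgn (t : ℝ) : ℝ := if t ≤ 0 then -1 else 1

/-- The signum term `sₙ` determining the step of the path, computed from the
current position `(x, y)`, with `a = x + y` and `c = r - n - 1`. -/
noncomputable def sStep (r n : ℕ) (x y : ℝ) : ℝ :=
  -sgn ((x + y) + (r : ℝ) / Real.sqrt 2 *
    (Real.sqrt (((x + y) - 1) ^ 2 + ((r : ℝ) - n - 1) ^ 2) -
     Real.sqrt (((x + y) + 1) ^ 2 + ((r : ℝ) - n - 1) ^ 2)))

/-- The signum circle path of radius `r`: `x₀ = r`, `y₀ = 0`,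
`xₙ₊₁ = xₙ + sₙ/2 - 1/2`, `yₙ₊₁ = yₙ + sₙ/2 + 1/2`. -/
noncomputable def circlePath (r : ℕ) : ℕ → ℝ × ℝ
  | 0 => ((r : ℝ), 0)
  | n + 1 =>
    let p := circlePath r n
    let s := sStep r n p.1 p.2
    (p.1 + s / 2 - 1 / 2, p.2 + s / 2 + 1 / 2)

/-- The signum term `sₙ` along the signum circle path of radius `r`. -/
noncomputable def sTerm (r n : ℕ) : ℝ := sStep r n (circlePath r n).1 (circlePath r n).2

lemma aux_le_sq {a b : ℝ} (h : a ^ 2 ≤ b ^ 2) (hb : 0 ≤ b) : a ≤ b := (abs_le.1 (abs_le_of_sq_le_sq h hb)).2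

lemma aux_key (R a c : ℝ) (hR : 1 ≤ R) (ha : 0 < a) :
    (a + R / Real.sqrt 2 * (Real.sqrt ((a - 1) ^ 2 + c ^ 2) - Real.sqrt ((a + 1) ^ 2 + c ^ 2)) ≤ 0)
      ↔ a ^ 2 * (2 * R ^ 2 - 1) + 2 * R ^ 2 * c ^ 2 ≤ 2 * R ^ 2 * (2 * R ^ 2 - 1) := by
  set v := Real.sqrt ((a - 1) ^ 2 + c ^ 2) with hv
  set u := Real.sqrt ((a + 1) ^ 2 + c ^ 2) with hu
  have hv0 : 0 ≤ v := Real.sqrt_nonneg _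
  have hu0 : 0 < u := Real.sqrt_pos.2 (by positivity)
  have hv2 : v ^ 2 = (a - 1) ^ 2 + c ^ 2 := Real.sq_sqrt (by positivity)
  have hu2 : u ^ 2 = (a + 1) ^ 2 + c ^ 2 := Real.sq_sqrt (by positivity)
  have huv : (u - v) * (u + v) = 4 * a := by linarith [hu2, hv2, show (u-v)*(u+v) = u^2 - v^2 by ring]
  have hd : 0 < u - v := by
    by_contra h
    have : (u - v) * (u + v) ≤ 0 := mul_nonpos_of_nonpos_of_nonneg (by linarith) (by linarith)
    linarith
  have hs : 0 < Real.sqrt 2 := by positivity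
  have hs2 : Real.sqrt 2 ^ 2 = 2 := Real.sq_sqrt (by norm_num)
  have e : R / Real.sqrt 2 = R * Real.sqrt 2 / 2 := by
    rw [div_eq_div_iff hs.ne' two_ne_zero]; nlinarith
  have e2 : a + R / Real.sqrt 2 * (v - u) = (u - v) / 4 * ((u + v) - 2 * (R * Real.sqrt 2)) := by
    rw [e]; linear_combination (-1/4) * huv
  set K := R * Real.sqrt 2 with hK
  have hK0 : 0 < K := by positivity
  have hK2 : K ^ 2 = 2 * R ^ 2 := by rw [hK, mul_pow, hs2]; ring
  have e3 : (u * v) ^ 2 = (a ^ 2 + c ^ 2 + 1) ^ 2 - 4 * a ^ 2 := by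
    rw [mul_pow, hu2, hv2]; ring
  have huv0 : 0 ≤ u * v := by positivity
  rw [e2]
  constructor
  · intro h
    have h1 : u + v ≤ 2 * K := by
      by_contra h'
      have : 0 < (u - v) / 4 * ((u + v) - 2 * K) := mul_pos (by linarith) (by linarith)
      linarith
    have h2 : (u + v) ^ 2 ≤ (2 * K) ^ 2 := pow_le_pow_left₀ (by linarith) h1 2
    have h3 : u * v ≤ 4 * R ^ 2 - (a ^ 2 + c ^ 2 + 1) := by nlinarith
    have h4 := pow_le_pow_left₀ huv0 h3 2
    rw [e3] at h4
    nlinarith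
  · intro h
    have hR2 : 1 ≤ R ^ 2 := by nlinarith
    have h0 : a ^ 2 + c ^ 2 ≤ 2 * R ^ 2 := by
      by_contra h'
      nlinarith [mul_pos (sub_pos.2 (not_le.1 h')) (show 0 < 2 * R ^ 2 - 1 by linarith), sq_nonneg c]
    have h3 : u * v ≤ 4 * R ^ 2 - (a ^ 2 + c ^ 2 + 1) := by
      apply aux_le_sq 
      · rw [e3]; nlinarith
      · linarith
    have h1 : u + v ≤ 2 * K := by
      apply aux_le_sq
      · nlinarith
      · linarith
    exact mul_nonpos_of_nonneg_of_nonpos (by linarith) (by linarith)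

noncomputable def auxL (R : ℝ) : ℝ := 2 * R ^ 2 / (2 * R ^ 2 - 1)
noncomputable def auxF (R c : ℝ) : ℝ := Real.sqrt (2 * R ^ 2 - auxL R * c ^ 2)

lemma auxL_mul (R : ℝ) (hR : 1 ≤ R) : auxL R * (2 * R ^ 2 - 1) = 2 * R ^ 2 := by
  have : 0 < 2 * R ^ 2 - 1 := by nlinarith
  unfold auxL; field_simp

lemma auxL_ge (R : ℝ) (hR : 1 ≤ R) : 1 ≤ auxL R := by
  have : 0 < 2 * R ^ 2 - 1 := by nlinarith
  unfold auxL; rw [le_div_iff₀ this]; linarith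

lemma sStep_eq (r n : ℕ) (hr : 1 ≤ r) (x y : ℝ) (ha : 0 < x + y)
    (hc : auxL r * ((r : ℝ) - n - 1) ^ 2 ≤ 2 * (r : ℝ) ^ 2) :
    sStep r n x y = if x + y ≤ auxF r ((r : ℝ) - n - 1) then 1 else -1 := by
  have hR : (1 : ℝ) ≤ r := by exact_mod_cast hr
  have hk := aux_key r (x + y) ((r : ℝ) - n - 1) hR ha
  have hp : 0 < 2 * (r : ℝ) ^ 2 - 1 := by nlinarith
  have hL := auxL_mul r hR
  unfold sStep sgn
  have : (x + y ≤ auxF r ((r : ℝ) - n - 1)) ↔ (x + y) ^ 2 * (2 * (r : ℝ) ^ 2 - 1) + 2 * (r : ℝ) ^ 2 * ((r : ℝ) - n - 1) ^ 2 ≤ 2 * (r : ℝ) ^ 2 * (2 * (r : ℝ) ^ 2 - 1) := by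
    unfold auxF
    rw [Real.le_sqrt' ha]
    rw [← mul_le_mul_iff_left₀ hp]
    have : (2 * (r:ℝ) ^ 2 - auxL r * ((r : ℝ) - n - 1) ^ 2) * (2 * (r : ℝ) ^ 2 - 1) = 2 * (r : ℝ) ^ 2 * (2 * (r : ℝ) ^ 2 - 1) - 2 * (r : ℝ) ^ 2 * ((r : ℝ) - n - 1) ^ 2 := by
      linear_combination (-((r : ℝ) - n - 1) ^ 2) * hL
    rw [this]
    constructor <;> intro h <;> linarith
  rw [← hk] at this
  simp only [this]
  split_ifs <;> norm_num

lemma aux_csq (R c : ℝ) (h1 : c ≤ R - 1) (h2 : -(R - 1) ≤ c) : c ^ 2 ≤ (R - 1) ^ 2 := by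
  nlinarith

lemma aux_arg (R c : ℝ) (hR : 1 ≤ R) (h1 : c ≤ R - 1) (h2 : -(R - 1) ≤ c) :
    R ^ 2 ≤ 2 * R ^ 2 - auxL R * c ^ 2 := by
  have hL := auxL_mul R hR
  have h1L := auxL_ge R hR
  have h := aux_csq R c h1 h2
  have : auxL R * c ^ 2 ≤ auxL R * (R - 1) ^ 2 := mul_le_mul_of_nonneg_left h (by linarith)
  nlinarith [mul_nonneg (sub_nonneg.2 h1L) (show 0 ≤ R ^ 2 + 2 * R - 2 by nlinarith)]

lemma aux_F_sq (R c : ℝ) (hR : 1 ≤ R) (h1 : c ≤ R - 1) (h2 : -(R - 1) ≤ c) :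
    auxF R c ^ 2 = 2 * R ^ 2 - auxL R * c ^ 2 :=
  Real.sq_sqrt (by nlinarith [aux_arg R c hR h1 h2])

lemma aux_F_ge (R c : ℝ) (hR : 1 ≤ R) (h1 : c ≤ R - 1) (h2 : -(R - 1) ≤ c) :
    R ≤ auxF R c := by
  apply Real.le_sqrt_of_sq_le
  exact aux_arg R c hR h1 h2

lemma aux_F_lt (R c : ℝ) (hR : 1 ≤ R) (hc : c ^ 2 = (R - 1) ^ 2) :
    auxF R c < R + 1 := by
  have hL := auxL_mul R hR
  have h1L := auxL_ge R hR
  have hp : 0 < 2 * R ^ 2 - 1 := by nlinarith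
  unfold auxF
  rw [Real.sqrt_lt' (by linarith), hc]
  have : (2 * R ^ 2 - auxL R * (R - 1) ^ 2) * (2 * R ^ 2 - 1) < (R + 1) ^ 2 * (2 * R ^ 2 - 1) := by
    have : (2 * R ^ 2 - auxL R * (R - 1) ^ 2) * (2 * R ^ 2 - 1) = 2 * R ^ 2 * (2 * R ^ 2 - 1) - 2 * R ^ 2 * (R - 1) ^ 2 := by
      linear_combination (-(R - 1) ^ 2) * hL
    rw [this]
    nlinarith
  exact lt_of_mul_lt_mul_right this hp.le

lemma aux_F_diff (R c : ℝ) (hR : 1 ≤ R) (h1 : c ≤ R - 1) (h2 : -(R - 1) ≤ c - 1) :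
    |auxF R c - auxF R (c - 1)| ≤ 1 := by
  have hL := auxL_mul R hR
  have h1L := auxL_ge R hR
  have hp : 0 < 2 * R ^ 2 - 1 := by nlinarith
  have a1 := aux_F_sq R c hR h1 (by linarith)
  have a2 := aux_F_sq R (c - 1) hR (by linarith) h2
  have b1 := aux_F_ge R c hR h1 (by linarith)
  have b2 := aux_F_ge R (c - 1) hR (by linarith) h2
  have hl : auxL R * (2 * R - 3) ≤ 2 * R := by
    have : auxL R * (2 * R - 3) * (2 * R ^ 2 - 1) ≤ 2 * R * (2 * R ^ 2 - 1) := by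
      have : auxL R * (2 * R - 3) * (2 * R ^ 2 - 1) = 2 * R ^ 2 * (2 * R - 3) := by
        linear_combination (2 * R - 3) * hL
      rw [this]; nlinarith
    exact le_of_mul_le_mul_right this hp
  have hu : auxL R * (2 * c - 1) ≤ 2 * R :=
    le_trans (mul_le_mul_of_nonneg_left (by linarith) (by linarith)) hl
  have hd : -(2 * R) ≤ auxL R * (2 * c - 1) := by
    have := mul_le_mul_of_nonneg_left (show -(2 * c - 1) ≤ 2 * R - 3 by linarith) (show 0 ≤ auxL R by linarith)
    linarith
  rw [abs_le]
  constructor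
  · by_contra h
    nlinarith
  · by_contra h
    nlinarith

lemma sStep_cases (r n : ℕ) (x y : ℝ) : sStep r n x y = 1 ∨ sStep r n x y = -1 := by
  unfold sStep sgn
  split_ifs <;> norm_num

lemma path_inv (r : ℕ) (n : ℕ) :
    (circlePath r n).1 - (circlePath r n).2 = r - n ∧
      ∃ m : ℤ, (circlePath r n).1 + (circlePath r n).2 = r + n + 2 * m := by
  induction n with
  | zero => exact ⟨by simp [circlePath], 0, by simp [circlePath]⟩
  | succ n ih =>
    obtain ⟨h1, m, h2⟩ := ih
    simp only [circlePath]
    refine ⟨by push_cast; linarith, ?_⟩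
    rcases sStep_cases r n (circlePath r n).1 (circlePath r n).2 with h | h
    · exact ⟨m, by rw [h]; push_cast; linarith⟩
    · exact ⟨m - 1, by rw [h]; push_cast; linarith⟩

lemma path_step (r n : ℕ) (hr : 1 ≤ r) (hn : n + 2 ≤ 2 * r)
    (h0 : 0 < (circlePath r n).1 + (circlePath r n).2)
    (h1 : auxF r ((r : ℝ) - n - 1) - 2 < (circlePath r n).1 + (circlePath r n).2)
    (h2 : (circlePath r n).1 + (circlePath r n).2 ≤ auxF r ((r : ℝ) - n - 1) + 2) :
    auxF r ((r : ℝ) - n - 1) - 1 < (circlePath r (n + 1)).1 + (circlePath r (n + 1)).2 ∧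
    (circlePath r (n + 1)).1 + (circlePath r (n + 1)).2 ≤ auxF r ((r : ℝ) - n - 1) + 1 := by
  have hR : (1 : ℝ) ≤ r := by exact_mod_cast hr
  have hn' : (n : ℝ) + 2 ≤ 2 * r := by exact_mod_cast hn
  have hn0 : (0 : ℝ) ≤ n := Nat.cast_nonneg n
  have hA := aux_arg r ((r : ℝ) - n - 1) hR (by linarith) (by linarith)
  have hs := sStep_eq r n hr _ _ h0 (by nlinarith)
  simp only [circlePath]
  split_ifs at hs with h
  · rw [hs]; constructor <;> linarith
  · rw [hs]; constructor <;> linarith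

lemma path_bd (r : ℕ) (hr : 1 ≤ r) (n : ℕ) (hn : n + 2 ≤ 2 * r) :
    auxF r ((r : ℝ) - n - 1) - 1 < (circlePath r (n + 1)).1 + (circlePath r (n + 1)).2 ∧
    (circlePath r (n + 1)).1 + (circlePath r (n + 1)).2 ≤ auxF r ((r : ℝ) - n - 1) + 1 := by
  have hR : (1 : ℝ) ≤ r := by exact_mod_cast hr
  induction n with
  | zero =>
    have a1 := aux_F_ge r ((r : ℝ) - (0 : ℕ) - 1) hR (by simp) (by push_cast; linarith)
    have a2 := aux_F_lt r ((r : ℝ) - (0 : ℕ) - 1) hR (by simp)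
    apply path_step r 0 hr hn <;> simp only [circlePath] <;> linarith
  | succ n ih =>
    obtain ⟨i1, i2⟩ := ih (by omega)
    have hn' : (n : ℝ) + 1 + 2 ≤ 2 * r := by exact_mod_cast hn
    have hn0 : (0 : ℝ) ≤ n := Nat.cast_nonneg n
    have hd := aux_F_diff r ((r : ℝ) - n - 1) hR (by linarith) (by linarith)
    have hg := aux_F_ge r ((r : ℝ) - n - 1) hR (by linarith) (by linarith)
    have e : (r : ℝ) - n - 1 - 1 = (r : ℝ) - (n + 1 : ℕ) - 1 := by push_cast; ring
    rw [e, abs_le] at hd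
    obtain ⟨d1, d2⟩ := hd
    apply path_step r (n + 1) hr hn <;> linarith

lemma path_end (r : ℕ) (hr : 1 ≤ r) : circlePath r (2 * r) = (0, (r : ℝ)) := by
  have hR : (1 : ℝ) ≤ r := by exact_mod_cast hr
  obtain ⟨k, rfl⟩ : ∃ k, r = k + 1 := ⟨r - 1, by omega⟩
  obtain ⟨b1, b2⟩ := path_bd (k + 1) hr (2 * k) (by omega)
  obtain ⟨-, m, hm⟩ := path_inv (k + 1) (2 * k + 1)
  have hk0 : (0 : ℝ) ≤ k := Nat.cast_nonneg k
  have hi := (path_inv (k + 1) (2 * (k + 1))).1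
  have g1 := aux_F_ge (k + 1 : ℕ) (((k + 1 : ℕ) : ℝ) - (2 * k : ℕ) - 1) hR (by push_cast; linarith) (by push_cast; linarith)
  have g2 := aux_F_lt (k + 1 : ℕ) (((k + 1 : ℕ) : ℝ) - (2 * k : ℕ) - 1) hR (by push_cast; ring)
  have hlo : ((k : ℝ)) < k + 1 + (2 * k + 1) + 2 * m := by push_cast at *; linarith
  have hhi : (k : ℝ) + 1 + (2 * k + 1) + 2 * m < k + 3 := by push_cast at *; linarith
  have hm' : m = -k := by
    have h1 : (k : ℤ) < k + 1 + (2 * k + 1) + 2 * m := by exact_mod_cast hlo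
    have h2 : (k : ℤ) + 1 + (2 * k + 1) + 2 * m < k + 3 := by exact_mod_cast hhi
    omega
  have ha : (circlePath (k + 1) (2 * k + 1)).1 + (circlePath (k + 1) (2 * k + 1)).2 = k + 2 := by
    rw [hm, hm']; push_cast; ring
  have hs : sStep (k + 1) (2 * k + 1) (circlePath (k + 1) (2 * k + 1)).1 (circlePath (k + 1) (2 * k + 1)).2 = -1 := by
    unfold sStep sgn
    rw [if_neg]
    rw [ha, aux_key _ _ _ hR (by linarith)]
    push_cast
    nlinarith [pow_nonneg hk0 2, pow_nonneg hk0 3, pow_nonneg hk0 4]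
  have hf : (circlePath (k + 1) (2 * (k + 1))).1 + (circlePath (k + 1) (2 * (k + 1))).2 = k + 1 := by
    rw [show 2 * (k + 1) = (2 * k + 1) + 1 by ring]
    simp only [circlePath] at hs ha ⊢
    rw [hs]; linarith
  ext
  · push_cast at *; linarith
  · push_cast at *; linarith

/-- each step of the signum circle path moves one unit left or one
unit up (so consecutive points are nearest neighbours for the Manhattan
distance), the path starts at `(r, 0)` and ends after `2r` steps at `(0, r)`. -/
theorem signumPath_valid_steps_and_endpoints (r : ℕ) (hr : 1 ≤ r) :
    (∀ n : ℕ, n ≤ 2 * r - 1 →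
      (((circlePath r (n + 1)).1 = (circlePath r n).1 - 1 ∧
          (circlePath r (n + 1)).2 = (circlePath r n).2) ∨
        ((circlePath r (n + 1)).1 = (circlePath r n).1 ∧
          (circlePath r (n + 1)).2 = (circlePath r n).2 + 1)) ∧
      |(circlePath r (n + 1)).1 - (circlePath r n).1| +
        |(circlePath r (n + 1)).2 - (circlePath r n).2| = 1) ∧
    circlePath r 0 = ((r : ℝ), 0) ∧
    circlePath r (2 * r) = (0, (r : ℝ)) := by
  refine ⟨fun n _ => ?_, rfl, path_end r hr⟩
  simp only [circlePath]
  rcases sStep_cases r n (circlePath r n).1 (circlePath r n).2 with h | h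
  · rw [h]
    refine ⟨Or.inr ⟨by ring, by ring⟩, ?_⟩
    ring_nf; norm_num
  · rw [h]
    refine ⟨Or.inl ⟨by ring, by ring⟩, ?_⟩
    ring_nf; norm_num
end

section
/- For every integer radius r ≥ 1, the partial sums S_n of the signum terms of the signum circle path of radius r satisfy S_{2r−1} = 0, S_{2r−2} = 1, and the symmetry S_n = S_{2r−2−n} for all n with 0 ≤ n ≤ 2r−2. -/
open Filter Finset Real

lemma ellipse_iff (r a c : ℝ) (hr : 1 ≤ r) (ha : 0 < a) :
    a + r / √2 * (√((a - 1) ^ 2 + c ^ 2) - √((a + 1) ^ 2 + c ^ 2)) ≤ 0 ↔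
      (2 * r ^ 2 - 1) * a ^ 2 + 2 * r ^ 2 * c ^ 2 ≤ 2 * r ^ 2 * (2 * r ^ 2 - 1) := by
  have hQ2 := Real.sq_sqrt (show 0 ≤ (a - 1) ^ 2 + c ^ 2 by positivity)
  have hP2 := Real.sq_sqrt (show 0 ≤ (a + 1) ^ 2 + c ^ 2 by positivity)
  have hQ := Real.sqrt_nonneg ((a - 1) ^ 2 + c ^ 2)
  have hP : 0 < √((a + 1) ^ 2 + c ^ 2) := Real.sqrt_pos.2 (by positivity)
  have hw2 := Real.sq_sqrt (show (0:ℝ) ≤ 2 by norm_num)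
  have hw : 0 < √(2:ℝ) := Real.sqrt_pos.2 (by norm_num)
  generalize √((a - 1) ^ 2 + c ^ 2) = Q at *
  generalize √((a + 1) ^ 2 + c ^ 2) = P at *
  generalize √(2:ℝ) = w at *
  have e1 : a + r / w * (Q - P) = a * (w * (P + Q) - 4 * r) / (w * (P + Q)) := by
    have : P + Q ≠ 0 := by positivity
    field_simp
    linear_combination r * (hQ2 - hP2)
  have h1 : a + r / w * (Q - P) ≤ 0 ↔ w * (P + Q) ≤ 4 * r := by
    rw [e1, div_le_iff₀ (by positivity), zero_mul]
    constructor
    · intro h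
      by_contra hh
      push Not at hh
      nlinarith
    · intro h
      nlinarith
  have h2 : w * (P + Q) ≤ 4 * r ↔ (w * (P + Q)) ^ 2 ≤ (4 * r) ^ 2 :=
    (pow_le_pow_iff_left₀ (by positivity) (by positivity) (by norm_num)).symm
  have h3 : (w * (P + Q)) ^ 2 = 4 * (a ^ 2 + c ^ 2 + 1) + 4 * (P * Q) := by
    rw [mul_pow, hw2]; linear_combination 2 * hP2 + 2 * hQ2
  have hPQ : (P * Q) ^ 2 = (a ^ 2 + c ^ 2 + 1) ^ 2 - 4 * a ^ 2 := by
    rw [mul_pow, hP2, hQ2]; ring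
  have hPQ0 : 0 ≤ P * Q := by positivity
  rw [h1, h2, h3]
  generalize P * Q = R at *
  have hr2 : 1 ≤ r ^ 2 := by nlinarith
  constructor
  · intro h
    have : R ^ 2 ≤ (4 * r ^ 2 - (a ^ 2 + c ^ 2 + 1)) ^ 2 :=
      pow_le_pow_left₀ hPQ0 (by linarith) 2
    nlinarith
  · intro h
    have k1 : a ^ 2 ≤ 2 * r ^ 2 := by
      have : 0 ≤ r ^ 2 * c ^ 2 := by positivity
      by_contra hh
      push Not at hh
      nlinarith
    have k2 : c ^ 2 ≤ 2 * r ^ 2 - 1 := by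
      have : 0 ≤ (2 * r ^ 2 - 1) * a ^ 2 := mul_nonneg (by linarith) (by positivity)
      by_contra hh
      push Not at hh
      nlinarith
    have : R ≤ 4 * r ^ 2 - (a ^ 2 + c ^ 2 + 1) := by
      refine (pow_le_pow_iff_left₀ hPQ0 (by linarith) (two_ne_zero)).1 ?_
      nlinarith
    linarith

/-- Closed elliptical region. -/
def InE (r a c : ℤ) : Prop :=
  (2 * r ^ 2 - 1) * a ^ 2 + 2 * r ^ 2 * c ^ 2 ≤ 2 * r ^ 2 * (2 * r ^ 2 - 1)

open Classical in
/-- Integer version of the sum of coordinates. -/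
noncomputable def bSeq (r : ℕ) : ℕ → ℤ
  | 0 => r
  | n + 1 => if InE r (bSeq r n) ((r : ℤ) - n - 1) then bSeq r n + 1 else bSeq r n - 1

lemma bSeq_of_in (r n : ℕ) (h : InE r (bSeq r n) ((r : ℤ) - n - 1)) :
    bSeq r (n + 1) = bSeq r n + 1 := by
  rw [bSeq, if_pos h]

lemma bSeq_of_notIn (r n : ℕ) (h : ¬ InE r (bSeq r n) ((r : ℤ) - n - 1)) :
    bSeq r (n + 1) = bSeq r n - 1 := by
  rw [bSeq, if_neg h]

lemma InE_neg (r a c : ℤ) : InE r a (-c) ↔ InE r a c := by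
  unfold InE; rw [neg_sq]

lemma InE_mono (r a c c' : ℤ) (h : InE r a c) (h0 : 0 ≤ c') (h1 : c' ≤ c) : InE r a c' := by
  unfold InE at *
  have : c' ^ 2 ≤ c ^ 2 := by nlinarith
  nlinarith [mul_le_mul_of_nonneg_left this (sq_nonneg r)]

lemma bSeq_inv (r : ℕ) (hr : 1 ≤ r) (n : ℕ) (hn : n ≤ r) :
    ((r : ℤ) - n ≤ bSeq r n ∧ (2 : ℤ) ∣ bSeq r n - (r - n)) ∧ 1 ≤ bSeq r n ∧
      ¬ InE r (bSeq r n + 1) ((r : ℤ) - n) ∧ InE r (bSeq r n - 1) ((r : ℤ) - n) := by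
  have hr' : (1 : ℤ) ≤ r := by exact_mod_cast hr
  have hr2 : (r : ℤ) ≤ (r : ℤ) ^ 2 := by nlinarith
  induction n with
  | zero =>
    simp only [bSeq, InE, Nat.cast_zero, sub_zero]
    refine ⟨⟨le_rfl, by simp⟩, hr', ?_, ?_⟩
    · push Not
      nlinarith [mul_nonneg (show (0 : ℤ) ≤ 2 * r ^ 2 - 1 by linarith) (show (0 : ℤ) ≤ r by linarith)]
    · nlinarith [mul_nonneg (show (0 : ℤ) ≤ r ^ 2 - 1 by linarith) (show (0 : ℤ) ≤ r - 1 by linarith)]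
  | succ n ih =>
    obtain ⟨⟨hb, hpar⟩, hpos, hout, hin⟩ := ih (by omega)
    have hn' : (n : ℤ) + 1 ≤ r := by exact_mod_cast hn
    have hc : (r : ℤ) - ((n + 1 : ℕ) : ℤ) = r - n - 1 := by push_cast; ring
    rw [hc]
    by_cases h : InE r (bSeq r n) ((r : ℤ) - n - 1)
    · rw [bSeq_of_in r n h]
      generalize bSeq r n = b at *
      refine ⟨⟨by omega, by omega⟩, by omega, ?_, by simpa using h⟩
      unfold InE at hout ⊢
      push Not at hout ⊢
      obtain ⟨d, hd⟩ : ∃ d, d = (r : ℤ) - n := ⟨_, rfl⟩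
      rw [← hd] at hout hb ⊢
      have : (0 : ℤ) ≤ (2 * r ^ 2 - 1) * (b - d) := mul_nonneg (by linarith) (by linarith)
      have hdr : d ≤ r := by omega
      nlinarith
    · rw [bSeq_of_notIn r n h]
      generalize bSeq r n = b at *
      have h1 : InE r (b - 1 - 1) ((r : ℤ) - n - 1) := by
        have := InE_mono r (b - 1) _ ((r : ℤ) - n - 1) hin (by omega) (by omega)
        unfold InE at this ⊢
        have h3 : (b - 1 - 1) ^ 2 ≤ (b - 1) ^ 2 ∨ b = 1 := by
          by_cases hb1 : b = 1
          · exact Or.inr hb1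
          · have : 2 ≤ b := by omega
            left; nlinarith
        rcases h3 with h3 | h3
        · nlinarith [mul_le_mul_of_nonneg_left h3 (show (0 : ℤ) ≤ 2 * r ^ 2 - 1 by linarith)]
        · exfalso
          apply h
          have : (r : ℤ) - n - 1 = 0 := by omega
          rw [this, h3]
          unfold InE
          nlinarith
      have hne : b ≠ r - n ∨ b ≠ 1 := by
        by_contra hh
        push Not at hh
        apply h
        have : (r : ℤ) - n - 1 = 0 := by omega
        rw [this, hh.2]
        unfold InE
        nlinarith
      refine ⟨⟨by omega, by omega⟩, ?_, by simpa using h, h1⟩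
      omega

lemma bSeq_symm (r : ℕ) (hr : 1 ≤ r) (k : ℕ) (hk : k ≤ r) :
    bSeq r (r + k) = bSeq r (r - k) := by
  induction k with
  | zero => rfl
  | succ k ih =>
    have ih := ih (by omega)
    obtain ⟨m, hm⟩ : ∃ m, m = r - (k + 1) := ⟨_, rfl⟩
    have hm1 : r - k = m + 1 := by omega
    rw [← hm]
    rw [hm1] at ih
    obtain ⟨-, -, hout, hin⟩ := bSeq_inv r hr m (by omega)
    have e1 : (r : ℤ) - m = k + 1 := by omega
    have e2 : (r : ℤ) - ((r + k : ℕ) : ℤ) - 1 = -(k + 1) := by push_cast; ring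
    rw [e1] at hout hin
    by_cases h : InE r (bSeq r m) ((r : ℤ) - m - 1)
    · rw [bSeq_of_in r m h] at ih
      rw [← add_assoc, bSeq_of_notIn, ih]
      · ring
      · rw [e2, InE_neg, ih]; exact hout
    · rw [bSeq_of_notIn r m h] at ih
      rw [← add_assoc, bSeq_of_in, ih]
      · ring
      · rw [e2, InE_neg, ih]; exact hin

lemma bSeq_symm' (r : ℕ) (hr : 1 ≤ r) (m : ℕ) (hm : m ≤ 2 * r) :
    bSeq r m = bSeq r (2 * r - m) := by
  rcases le_total m r with h | h
  · have := bSeq_symm r hr (r - m) (by omega)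
    rw [show r + (r - m) = 2 * r - m by omega, show r - (r - m) = m by omega] at this
    exact this.symm
  · have := bSeq_symm r hr (m - r) (by omega)
    rwa [show r + (m - r) = m by omega, show r - (m - r) = 2 * r - m by omega] at this

lemma bSeq_pos (r : ℕ) (hr : 1 ≤ r) (m : ℕ) (hm : m ≤ 2 * r) : 1 ≤ bSeq r m := by
  rcases le_total m r with h | h
  · exact (bSeq_inv r hr m h).2.1
  · rw [bSeq_symm' r hr m hm]
    exact (bSeq_inv r hr _ (by omega)).2.1

lemma sStep_eq_s3 (r n : ℕ) (hr : 1 ≤ r) (hn : n ≤ 2 * r) (x y : ℝ) (h : x + y = bSeq r n) :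
    sStep r n x y = bSeq r (n + 1) - bSeq r n := by
  have hb := bSeq_pos r hr n hn
  have key := ellipse_iff r (bSeq r n) ((r : ℝ) - n - 1) (by exact_mod_cast hr)
    (by exact_mod_cast (show 0 < bSeq r n by omega))
  have hE : InE r (bSeq r n) ((r : ℤ) - n - 1) ↔ (2 * (r : ℝ) ^ 2 - 1) * (bSeq r n : ℝ) ^ 2 +
      2 * (r : ℝ) ^ 2 * ((r : ℝ) - n - 1) ^ 2 ≤ 2 * (r : ℝ) ^ 2 * (2 * (r : ℝ) ^ 2 - 1) := by
    unfold InE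
    exact_mod_cast Iff.rfl
  unfold sStep sgn
  rw [h]
  by_cases hin : InE r (bSeq r n) ((r : ℤ) - n - 1)
  · rw [if_pos (key.2 (hE.1 hin)), bSeq_of_in r n hin]; push_cast; ring
  · rw [if_neg (fun hh => hin (hE.2 (key.1 hh))), bSeq_of_notIn r n hin]; push_cast; ring

lemma path_sum (r : ℕ) (hr : 1 ≤ r) (n : ℕ) (hn : n ≤ 2 * r) :
    (circlePath r n).1 + (circlePath r n).2 = bSeq r n := by
  induction n with
  | zero => simp [circlePath, bSeq]
  | succ n ih =>
    have ih := ih (by omega)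
    have := sStep_eq_s3 r n hr (by omega) _ _ ih
    simp only [circlePath]
    linarith

lemma sum_eq (r : ℕ) (hr : 1 ≤ r) (n : ℕ) (hn : n ≤ 2 * r) :
    ∑ k ∈ Finset.range n, sTerm r k = (bSeq r n : ℝ) - r := by
  induction n with
  | zero => simp [bSeq]
  | succ n ih =>
    rw [Finset.sum_range_succ, ih (by omega), sTerm,
      sStep_eq_s3 r n hr (by omega) _ _ (path_sum r hr n (by omega))]
    ring

lemma bSeq_one (r : ℕ) (hr : 1 ≤ r) : bSeq r 1 = r + 1 := by
  have hr' : (1 : ℤ) ≤ r := by exact_mod_cast hr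
  rw [show (1 : ℕ) = 0 + 1 from rfl, bSeq_of_in]
  · simp [bSeq]
  · simp only [bSeq, InE, Nat.cast_zero, sub_zero]
    have hr2 : (r : ℤ) ≤ (r : ℤ) ^ 2 := by nlinarith
    nlinarith [mul_nonneg (show (0 : ℤ) ≤ 2 * r ^ 2 - 1 by linarith) (show (0 : ℤ) ≤ r - 1 by linarith)]

/-- the partial sums `Sₙ = ∑_{k=0}^{n} sₖ` of the signum terms
satisfy `S_{2r-1} = 0`, `S_{2r-2} = 1`, and the symmetry `Sₙ = S_{2r-2-n}` for
all `0 ≤ n ≤ 2r-2`. -/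
theorem signumPath_partialSum_symmetry (r : ℕ) (hr : 1 ≤ r) :
    (∑ k ∈ Finset.range (2 * r), sTerm r k) = 0 ∧
    (∑ k ∈ Finset.range (2 * r - 1), sTerm r k) = 1 ∧
    ∀ n : ℕ, n ≤ 2 * r - 2 →
      (∑ k ∈ Finset.range (n + 1), sTerm r k) =
        ∑ k ∈ Finset.range (2 * r - 2 - n + 1), sTerm r k := by
  refine ⟨?_, ?_, ?_⟩
  · rw [sum_eq r hr _ le_rfl, bSeq_symm' r hr _ le_rfl]
    simp [bSeq]
  · rw [sum_eq r hr _ (by omega), bSeq_symm' r hr _ (by omega),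
      show 2 * r - (2 * r - 1) = 1 by omega, bSeq_one r hr]
    push_cast; ring
  · intro n hn
    rw [sum_eq r hr _ (by omega), sum_eq r hr _ (by omega), bSeq_symm' r hr _ (by omega),
      show 2 * r - (n + 1) = 2 * r - 2 - n + 1 by omega]
end

section
/- Conjecture: for every integer radius r ≥ 1, let A(r) = 2 · Σ_{n=0}^{2r−1} 1/a_n, where a_n = x_n + y_n is the Manhattan distance to the origin of the n-th point of the signum circle path of radius r (this is the arithmetic mean of the values π_n = 4r/a_n). Then A(r) converges to π as r → ∞. -/
open Filter Finset Real

lemma H_lip (r u v : ℝ) (hr : 0 < r) (hu : |u| ≤ r) (hv : |v| ≤ r) :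
    |√(2 * r ^ 2 - u ^ 2) - √(2 * r ^ 2 - v ^ 2)| ≤ |u - v| := by
  have hu2 : u ^ 2 ≤ r ^ 2 := sq_le_sq' (by linarith [(abs_le.mp hu).1]) (abs_le.mp hu).2
  have hv2 : v ^ 2 ≤ r ^ 2 := sq_le_sq' (by linarith [(abs_le.mp hv).1]) (abs_le.mp hv).2
  have h1 : r ≤ √(2 * r ^ 2 - u ^ 2) := Real.le_sqrt_of_sq_le (by linarith)
  have h2 : r ≤ √(2 * r ^ 2 - v ^ 2) := Real.le_sqrt_of_sq_le (by linarith)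
  have s1 := Real.sq_sqrt (show 0 ≤ 2 * r ^ 2 - u ^ 2 by nlinarith)
  have s2 := Real.sq_sqrt (show 0 ≤ 2 * r ^ 2 - v ^ 2 by nlinarith)
  set x := √(2 * r ^ 2 - u ^ 2)
  set y := √(2 * r ^ 2 - v ^ 2)
  have e : (x - y) * (x + y) = (v - u) * (u + v) := by nlinarith
  have e2 : |x - y| * (x + y) = |u - v| * |u + v| := by
    rw [← abs_of_pos (show 0 < x + y by linarith), ← abs_mul, e, abs_mul, abs_sub_comm v u]
  have h3 : |u + v| ≤ x + y := (abs_add_le u v).trans (by linarith)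
  have h4 : |x - y| * (x + y) ≤ |u - v| * (x + y) := by
    rw [e2]; exact mul_le_mul_of_nonneg_left h3 (abs_nonneg _)
  exact le_of_mul_le_mul_right h4 (by linarith)

lemma H_ge (r u : ℝ) (hu : |u| ≤ r) : r ≤ √(2 * r ^ 2 - u ^ 2) := by
  have hu2 : u ^ 2 ≤ r ^ 2 := sq_le_sq' (by linarith [(abs_le.mp hu).1]) (abs_le.mp hu).2
  exact Real.le_sqrt_of_sq_le (by linarith)

lemma step_aux (r a c : ℝ) (hr : 0 < r) (ha : 0 < a) :
    (a ^ 2 + c ^ 2 + 1 ≤ 2 * r ^ 2 →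
      a + r / √2 * (√((a - 1) ^ 2 + c ^ 2) - √((a + 1) ^ 2 + c ^ 2)) ≤ 0) ∧
    (2 * r ^ 2 < a ^ 2 + c ^ 2 →
      0 < a + r / √2 * (√((a - 1) ^ 2 + c ^ 2) - √((a + 1) ^ 2 + c ^ 2))) := by
  have s1 := Real.sq_sqrt (show 0 ≤ (a - 1) ^ 2 + c ^ 2 by positivity)
  have s2 := Real.sq_sqrt (show 0 ≤ (a + 1) ^ 2 + c ^ 2 by positivity)
  have p1 := Real.sqrt_nonneg ((a - 1) ^ 2 + c ^ 2)
  have p2 : 0 < √((a + 1) ^ 2 + c ^ 2) := Real.sqrt_pos.mpr (by positivity)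
  set P := √((a - 1) ^ 2 + c ^ 2)
  set Q := √((a + 1) ^ 2 + c ^ 2)
  have t1 : √2 ^ 2 = 2 := Real.sq_sqrt (by norm_num)
  have t2 : 0 < √2 := by positivity
  have hdiv : r / √2 = r * √2 / 2 := by
    field_simp; linarith
  rw [hdiv]
  set T := √2
  have e : (a + r * T / 2 * (P - Q)) * (P + Q) = a * (P + Q - 2 * T * r) := by
    have : (P - Q) * (P + Q) = - 4 * a := by nlinarith
    linear_combination (r * T / 2) * this
  have sq8 : (2 * T * r) ^ 2 = 8 * r ^ 2 := by
    rw [mul_pow, mul_pow, t1]; ring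
  have hPQ : 0 < P + Q := by linarith
  constructor
  · intro h
    have : P + Q ≤ 2 * T * r := by
      apply le_of_sq_le_sq _ (by positivity)
      rw [sq8]; nlinarith [sq_nonneg (P - Q)]
    by_contra hc
    push Not at hc
    have := mul_pos hc hPQ
    rw [e] at this
    nlinarith
  · intro h
    have hpq : a ^ 2 + c ^ 2 - 1 ≤ P * Q := by
      apply le_of_sq_le_sq _ (by positivity)
      rw [mul_pow, s1, s2]; nlinarith [sq_nonneg c]
    have : 2 * T * r < P + Q := by
      apply lt_of_pow_lt_pow_left₀ 2 (by positivity)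
      rw [sq8]; nlinarith
    have h5 : 0 < (a + r * T / 2 * (P - Q)) * (P + Q) := by
      rw [e]; exact mul_pos ha (by linarith)
    exact pos_of_mul_pos_left h5 hPQ.le

lemma path_bound (r : ℕ) (hr : 4 ≤ r) (n : ℕ) (hn : n < 2 * r) :
    |(circlePath r n).1 + (circlePath r n).2 - √(2 * (r : ℝ) ^ 2 - ((r : ℝ) - n - 1) ^ 2)| ≤ 3 := by
  have hr' : (4 : ℝ) ≤ r := by exact_mod_cast hr
  induction n with
  | zero =>
    have h := H_lip r ((r : ℝ) - (0 : ℕ) - 1) r (by linarith)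
      (by rw [abs_le]; constructor <;> push_cast <;> linarith)
      (by rw [abs_le]; constructor <;> linarith)
    have e : √(2 * (r : ℝ) ^ 2 - (r : ℝ) ^ 2) = r := by
      rw [show 2 * (r : ℝ) ^ 2 - (r : ℝ) ^ 2 = (r : ℝ) ^ 2 by ring]
      exact Real.sqrt_sq (by linarith)
    rw [e] at h
    simp only [circlePath]
    rw [add_zero, abs_sub_comm]
    refine h.trans ?_
    push_cast
    rw [abs_le]; constructor <;> linarith
  | succ n ih =>
    have ih := ih (by omega)
    have hn' : (n : ℝ) + 2 ≤ 2 * r := by exact_mod_cast (by omega : n + 2 ≤ 2 * r)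
    have hn0 : (0 : ℝ) ≤ n := Nat.cast_nonneg n
    have hc1 : |(r : ℝ) - n - 1| ≤ r := by rw [abs_le]; constructor <;> linarith
    have hc2 : |(r : ℝ) - (n + 1 : ℕ) - 1| ≤ r := by
      rw [abs_le]; constructor <;> push_cast <;> linarith
    have hl := H_lip r _ _ (by linarith) hc1 hc2
    have hd : |(r : ℝ) - n - 1 - ((r : ℝ) - (n + 1 : ℕ) - 1)| = 1 := by
      push_cast; ring_nf; norm_num
    rw [hd] at hl
    have hg := H_ge r _ hc1
    have hsq := Real.sq_sqrt (show 0 ≤ 2 * (r : ℝ) ^ 2 - ((r : ℝ) - n - 1) ^ 2 by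
      nlinarith [sq_le_sq' (abs_le.mp hc1).1 (abs_le.mp hc1).2])
    have hsucc : (circlePath r (n + 1)).1 + (circlePath r (n + 1)).2 =
        (circlePath r n).1 + (circlePath r n).2 +
          sStep r n (circlePath r n).1 (circlePath r n).2 := by
      simp only [circlePath]; ring
    rw [hsucc]
    unfold sStep sgn
    set a := (circlePath r n).1 + (circlePath r n).2
    set h := √(2 * (r : ℝ) ^ 2 - ((r : ℝ) - n - 1) ^ 2)
    set h' := √(2 * (r : ℝ) ^ 2 - ((r : ℝ) - (n + 1 : ℕ) - 1) ^ 2)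
    rw [abs_le] at ih hl
    have ha : 0 < a := by linarith
    obtain ⟨k1, k2⟩ := step_aux r a ((r : ℝ) - n - 1) (by linarith) ha
    rw [abs_le]
    split_ifs with hs
    · have : a ^ 2 ≤ h ^ 2 := by
        by_contra hcon
        push Not at hcon
        have := k2 (by linarith)
        linarith
      have : a ≤ h := le_of_sq_le_sq this (by linarith)
      constructor <;> linarith
    · have : h ^ 2 < a ^ 2 + 1 := by
        by_contra hcon
        push Not at hcon
        exact hs (k1 (by linarith))
      have : h < a + 1 := by nlinarith
      constructor <;> linarith

lemma arcsin_step (r c : ℝ) (hr : 0 < r) (h1 : -r ≤ c) (h2 : c + 1 ≤ r) :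
    |1 / √(2 * r ^ 2 - c ^ 2) - (arcsin ((c + 1) / (√2 * r)) - arcsin (c / (√2 * r)))|
      ≤ 1 / r ^ 2 := by
  have t1 : √2 ^ 2 = 2 := Real.sq_sqrt (by norm_num)
  have t2 : 0 < √2 := by positivity
  have t3 : 1 < √2 := by nlinarith
  have hTr : r < √2 * r := by nlinarith
  have hder : ∀ x ∈ Set.Icc c (c + 1), HasDerivAt (fun x => arcsin (x / (√2 * r)))
      (1 / √(2 * r ^ 2 - x ^ 2)) x := by
    intro x hx
    have hx1 : x / (√2 * r) < 1 := by
      rw [div_lt_one (by positivity)]; linarith [hx.2]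
    have hx2 : -1 < x / (√2 * r) := by
      rw [lt_div_iff₀ (by positivity)]; linarith [hx.1]
    have := (Real.hasDerivAt_arcsin hx2.ne' hx1.ne).comp x
      ((hasDerivAt_id x).div_const (√2 * r))
    refine this.congr_deriv ?_
    have e : 2 * r ^ 2 - x ^ 2 = (√2 * r) ^ 2 * (1 - (x / (√2 * r)) ^ 2) := by
      field_simp; rw [t1]; ring
    rw [e, Real.sqrt_mul (by positivity), Real.sqrt_sq (by positivity)]
    rw [div_mul_div_comm, one_mul, mul_comm (√2 * r)]
  obtain ⟨ξ, hξ, he⟩ := exists_hasDerivAt_eq_slope (fun x => arcsin (x / (√2 * r))) 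
    (fun x => 1 / √(2 * r ^ 2 - x ^ 2)) (show c < c + 1 by linarith)
    (fun x hx => (hder x hx).continuousAt.continuousWithinAt)
    (fun x hx => hder x ⟨hx.1.le, hx.2.le⟩)
  simp only [add_sub_cancel_left, div_one] at he
  rw [← he]
  have b1 : |c| ≤ r := abs_le.mpr ⟨h1, by linarith⟩
  have b2 : |ξ| ≤ r := abs_le.mpr ⟨by linarith [hξ.1], by linarith [hξ.2]⟩
  have hl := H_lip r ξ c hr b2 b1
  have g1 := H_ge r c b1
  have g2 := H_ge r ξ b2
  have h3 : |ξ - c| ≤ 1 := abs_le.mpr ⟨by linarith [hξ.1], by linarith [hξ.2]⟩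
  set x := √(2 * r ^ 2 - c ^ 2)
  set y := √(2 * r ^ 2 - ξ ^ 2)
  have hx : 0 < x := by linarith
  have hy : 0 < y := by linarith
  rw [div_sub_div _ _ hx.ne' hy.ne', abs_div, abs_of_pos (mul_pos hx hy)]
  apply div_le_div₀ (by norm_num) _ (by positivity) (by nlinarith)
  rw [one_mul, mul_one]; linarith

lemma term_bound (r : ℕ) (hr : 4 ≤ r) (n : ℕ) (hn : n < 2 * r) :
    |1 / ((circlePath r n).1 + (circlePath r n).2) -
      (arcsin (((r : ℝ) - n) / (√2 * r)) - arcsin (((r : ℝ) - (n + 1 : ℕ)) / (√2 * r)))|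
      ≤ 4 / ((r - 3) * r) := by
  have hr' : (4 : ℝ) ≤ r := by exact_mod_cast hr
  have hn' : (n : ℝ) + 1 ≤ 2 * r := by exact_mod_cast (by omega : n + 1 ≤ 2 * r)
  have hn0 : (0 : ℝ) ≤ n := Nat.cast_nonneg n
  have hp := path_bound r hr n hn
  have hs := arcsin_step r ((r : ℝ) - n - 1) (by linarith) (by linarith) (by linarith)
  rw [show (r : ℝ) - n - 1 + 1 = r - n by ring] at hs
  rw [show (r : ℝ) - (n + 1 : ℕ) = r - n - 1 by push_cast; ring]
  have hg := H_ge r ((r : ℝ) - n - 1) (by rw [abs_le]; constructor <;> linarith)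
  set a := (circlePath r n).1 + (circlePath r n).2
  set h := √(2 * (r : ℝ) ^ 2 - ((r : ℝ) - n - 1) ^ 2)
  have hh : 0 < h := by linarith
  have ha : (r : ℝ) - 3 ≤ a := by linarith [(abs_le.mp hp).1]
  have ha0 : 0 < a := by linarith
  have h1 : |1 / a - 1 / h| ≤ 3 / ((r - 3) * r) := by
    rw [div_sub_div _ _ ha0.ne' hh.ne', abs_div, abs_of_pos (mul_pos ha0 hh)]
    apply div_le_div₀ (by norm_num) _ (mul_pos (by linarith) (by linarith))
      (mul_le_mul ha hg (by linarith) ha0.le)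
    rw [one_mul, mul_one, abs_sub_comm]; exact hp
  have h2 : 1 / (r : ℝ) ^ 2 ≤ 1 / ((r - 3) * r) := by
    apply one_div_le_one_div_of_le (mul_pos (by linarith) (by linarith))
    nlinarith
  have h3 : 4 / (((r : ℝ) - 3) * r) = 3 / ((r - 3) * r) + 1 / ((r - 3) * r) := by ring
  rw [h3]
  exact (abs_sub_le _ (1 / h) _).trans (add_le_add h1 (hs.trans h2))

lemma arcsin_val : arcsin (1 / √2) = π / 4 := by
  rw [← Real.arcsin_sin (x := π / 4) (by linarith [pi_pos]) (by linarith [pi_pos]),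
    Real.sin_pi_div_four]
  congr 1
  have t1 : √2 ^ 2 = 2 := Real.sq_sqrt (by norm_num)
  field_simp; linarith

lemma sum_bound (r : ℕ) (hr : 4 ≤ r) :
    |2 * ∑ n ∈ Finset.range (2 * r), 1 / ((circlePath r n).1 + (circlePath r n).2) - π|
      ≤ 16 / ((r : ℝ) - 3) := by
  have hr' : (4 : ℝ) ≤ r := by exact_mod_cast hr
  have hr0 : (r : ℝ) ≠ 0 := by linarith
  have tel := Finset.sum_range_sub' (fun n : ℕ => arcsin (((r : ℝ) - n) / (√2 * r))) (2 * r)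
  have e1 : ((r : ℝ) - (0 : ℕ)) / (√2 * r) = 1 / √2 := by
    push_cast; field_simp; ring
  have e2 : ((r : ℝ) - (2 * r : ℕ)) / (√2 * r) = -(1 / √2) := by
    push_cast; field_simp; ring
  rw [e1, e2, arcsin_neg, arcsin_val] at tel
  have hb := (Finset.abs_sum_le_sum_abs _ _).trans (Finset.sum_le_sum
    (fun n hn => term_bound r hr n (Finset.mem_range.mp hn)))
  rw [Finset.sum_sub_distrib, tel, Finset.sum_const, Finset.card_range, nsmul_eq_mul] at hb
  have e3 : ((2 * r : ℕ) : ℝ) * (4 / (((r : ℝ) - 3) * r)) = 8 / (r - 3) := by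
    have : (r : ℝ) - 3 ≠ 0 := by linarith
    push_cast; field_simp; norm_num
  rw [e3] at hb
  have e4 : 16 / ((r : ℝ) - 3) = 2 * (8 / (r - 3)) := by ring
  rw [e4]
  rw [abs_le] at hb ⊢
  constructor <;> linarith [hb.1, hb.2]

/-- Conjecture: the arithmetic mean
`A(r) = 2 · ∑_{n=0}^{2r-1} 1/aₙ` of the values `πₙ = 4r/aₙ`, where
`aₙ = xₙ + yₙ` is the Manhattan distance of the `n`-th point of the signum
circle path of radius `r` to the origin, converges to `π` as `r → ∞`. -/
theorem arithmeticMean_pi_tendsto_pi :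
    Filter.Tendsto (fun r : ℕ =>
      2 * ∑ n ∈ Finset.range (2 * r),
        1 / ((circlePath r n).1 + (circlePath r n).2))
      Filter.atTop (nhds Real.pi) := by
  rw [tendsto_iff_norm_sub_tendsto_zero]
  have hlim : Tendsto (fun r : ℕ => 16 / ((r : ℝ) - 3)) atTop (nhds 0) := by
    apply Tendsto.div_atTop tendsto_const_nhds
    exact tendsto_atTop_add_const_right _ (-3) tendsto_natCast_atTop_atTop
  refine squeeze_zero' (Eventually.of_forall fun _ => norm_nonneg _) ?_ hlim
  filter_upwards [eventually_ge_atTop 4] with r hr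
  rw [Real.norm_eq_abs]
  exact sum_bound r hr
end

section
/- The series 2√2 · Σ_{k=0}^{∞} C(2k, k) / ((2k+1) · 8^k) converges and its sum equals π. -/
open Real

lemma aux_poch (n : ℕ) : (ascPochhammer ℝ n).eval (1/2 : ℝ) =
    (n.factorial : ℝ) * ((Nat.centralBinom n : ℝ) / 4 ^ n) := by
  induction n with
  | zero => simp
  | succ n ih =>
    have h : ((n:ℝ) + 1) * (Nat.centralBinom (n+1) : ℝ) = 2 * (2 * n + 1) * Nat.centralBinom n := by
      exact_mod_cast Nat.succ_mul_centralBinom_succ n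
    rw [ascPochhammer_succ_eval, ih, Nat.factorial_succ, pow_succ]
    push_cast
    have : ((n:ℝ) + 1) * (n.factorial : ℝ) * ((Nat.centralBinom (n+1) : ℝ) / (4 ^ n * 4))
      = (n.factorial : ℝ) * (((n:ℝ) + 1) * (Nat.centralBinom (n+1) : ℝ)) / (4 ^ n * 4) := by ring
    rw [this, h]
    field_simp
    ring

lemma aux_choose (n : ℕ) : Ring.choose ((1/2 : ℝ) + n - 1) n = (Nat.centralBinom n : ℝ) / 4 ^ n := by
  rw [← Ring.multichoose_eq]
  have h := Ring.factorial_nsmul_multichoose_eq_ascPochhammer (1/2 : ℝ) n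
  rw [Polynomial.ascPochhammer_smeval_eq_eval, aux_poch, nsmul_eq_mul] at h
  exact mul_left_cancel₀ (by positivity) h

lemma aux_sum (x : ℝ) (hx : |x| < 1) :
    ∑' n : ℕ, (Nat.centralBinom n : ℝ) / 4 ^ n * x ^ (2 * n) = 1 / √(1 - x ^ 2) := by
  have h := (one_div_one_sub_rpow_hasFPowerSeriesOnBall_zero (1/2)).hasSum (y := x ^ 2) (by
    have : |x ^ 2| < 1 := by rw [abs_pow]; exact pow_lt_one₀ (abs_nonneg x) hx (by norm_num)
    rw [Metric.mem_eball, edist_zero_right, ← ofReal_norm, Real.norm_eq_abs]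
    exact ENNReal.ofReal_lt_one.2 this)
  have h2 := h.tsum_eq
  simp only [zero_add, ← Real.sqrt_eq_rpow] at h2
  rw [← h2]
  refine tsum_congr fun n => ?_
  rw [FormalMultilinearSeries.ofScalars_apply_eq, aux_choose, pow_mul, smul_eq_mul]

lemma aux_c (n : ℕ) : 0 ≤ (Nat.centralBinom n : ℝ) / 4 ^ n ∧ (Nat.centralBinom n : ℝ) / 4 ^ n ≤ 1 := by
  refine ⟨by positivity, ?_⟩
  rw [div_le_one (by positivity)]
  exact_mod_cast Nat.centralBinom_le_four_pow n

lemma aux_arcsin (x : ℝ) (hx : x ∈ Metric.ball (0:ℝ) (4/5)) :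
    ∑' n : ℕ, (Nat.centralBinom n : ℝ) / 4 ^ n * (x ^ (2 * n + 1) / (2 * n + 1)) = arcsin x := by
  have hlt : ∀ y ∈ Metric.ball (0:ℝ) (4/5), |y| < 4/5 := fun y hy => by simpa using hy
  have hpre : IsPreconnected (Metric.ball (0:ℝ) (4/5)) := (convex_ball _ _).isPreconnected
  have h0 : (0:ℝ) ∈ Metric.ball (0:ℝ) (4/5) := by simp
  have hd : ∀ y ∈ Metric.ball (0:ℝ) (4/5), HasDerivAt (fun x : ℝ =>
      ∑' n : ℕ, (Nat.centralBinom n : ℝ) / 4 ^ n * (x ^ (2 * n + 1) / (2 * n + 1)))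
      (1 / √(1 - y ^ 2)) y := by
    intro y hy
    rw [← aux_sum y (by linarith [hlt y hy])]
    refine hasDerivAt_tsum_of_isPreconnected (𝕜 := ℝ) (F := ℝ) (u := fun n => ((4/5 : ℝ) ^ 2) ^ n)
      (g := fun (n : ℕ) (x : ℝ) => (Nat.centralBinom n : ℝ) / 4 ^ n * (x ^ (2 * n + 1) / (2 * n + 1)))
      (g' := fun (n : ℕ) (x : ℝ) => (Nat.centralBinom n : ℝ) / 4 ^ n * x ^ (2 * n))
      (summable_geometric_of_lt_one (by norm_num) (by norm_num)) Metric.isOpen_ball hpre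
      ?_ ?_ h0 ?_ hy
    · intro n z _
      refine HasDerivAt.const_mul _ ?_
      have := (hasDerivAt_pow (2 * n + 1) z).div_const (2 * n + 1)
      convert this using 1
      push_cast
      have : (2 * (n:ℝ) + 1) ≠ 0 := by positivity
      field_simp
    · intro n z hz
      rw [norm_mul, norm_of_nonneg (aux_c n).1, ← pow_mul, norm_pow, Real.norm_eq_abs]
      calc _ ≤ 1 * (4/5 : ℝ) ^ (2 * n) := by
            gcongr
            · exact (aux_c n).2
            · exact (hlt z hz).le
        _ = _ := one_mul _
    · simp [summable_zero]
  have hne : ∀ y ∈ Metric.ball (0:ℝ) (4/5), y ≠ -1 ∧ y ≠ 1 := by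
    intro y hy
    have := abs_lt.1 (hlt y hy)
    constructor <;> intro h <;> linarith
  refine Metric.isOpen_ball.eqOn_of_deriv_eq hpre
    (fun y hy => (hd y hy).differentiableAt.differentiableWithinAt)
    (fun y hy => (hasDerivAt_arcsin (hne y hy).1 (hne y hy).2).differentiableAt.differentiableWithinAt)
    (fun y hy => ?_) h0 (by simp) hx
  rw [(hd y hy).deriv, deriv_arcsin]

/-- the series `2√2 · ∑_{k=0}^∞ C(2k,k)/((2k+1)·8^k)` converges
and its sum equals `π`. -/
theorem central_binomial_series_eq_pi :
    Summable (fun k : ℕ => (Nat.choose (2 * k) k : ℝ) / ((2 * k + 1) * 8 ^ k)) ∧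
    2 * Real.sqrt 2 *
      ∑' k : ℕ, (Nat.choose (2 * k) k : ℝ) / ((2 * k + 1) * 8 ^ k) = Real.pi := by
  have h2 : √2 ^ 2 = 2 := Real.sq_sqrt (by norm_num)
  have hp : 0 < √2 := by positivity
  constructor
  · refine Summable.of_nonneg_of_le (fun k => by positivity) (fun k => ?_)
      (summable_geometric_of_lt_one (r := (1/2 : ℝ)) (by norm_num) (by norm_num))
    have h := (aux_c k).2
    rw [Nat.centralBinom_eq_two_mul_choose, div_le_one (by positivity)] at h
    rw [div_le_iff₀ (by positivity)]
    have e : (1/2 : ℝ) ^ k * ((2 * k + 1) * 8 ^ k) = (2 * k + 1) * 4 ^ k := by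
      rw [show (4:ℝ) = 1/2 * 8 by norm_num, mul_pow]; ring
    rw [e]
    have : (0:ℝ) ≤ k * 4 ^ k := by positivity
    linarith
  · have h := aux_arcsin (√2 / 2) (by
      rw [mem_ball_zero_iff, norm_of_nonneg (by positivity)]
      nlinarith)
    have ha : arcsin (√2 / 2) = π / 4 := by
      rw [← sin_pi_div_four]
      exact arcsin_sin (by linarith [pi_pos]) (by linarith [pi_pos])
    rw [ha] at h
    have : π = 4 * (π / 4) := by ring
    rw [this, ← h, ← tsum_mul_left, ← tsum_mul_left]
    refine tsum_congr fun k => ?_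
    rw [Nat.centralBinom_eq_two_mul_choose, pow_succ, pow_mul, div_pow, h2,
      show (8:ℝ) = 4 * 2 by norm_num, mul_pow, show (2:ℝ) / 2 ^ 2 = 1 / 2 by norm_num, div_pow, one_pow]
    field_simp
    ring
end

section
/- Proposition: for every integer radius r ≥ 1, let M(r) = (1/(8r²)) · Σ_{n=0}^{2r−1} a_n, where a_n = x_n + y_n is the Manhattan distance to the origin of the n-th point of the signum circle path of radius r (this is the arithmetic mean of the values 1/π_n = a_n/(4r)). Then M(r) converges to π/16 + 1/8 as r → ∞. -/
open Filter Finset Real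

/-- circle height -/
noncomputable def hh (t : ℝ) : ℝ := Real.sqrt (2 - t ^ 2)

lemma hh_sq {x : ℝ} (hx : |x| ≤ 1) : hh x ^ 2 = 2 - x ^ 2 := by
  unfold hh
  rw [Real.sq_sqrt]
  have := (sq_le_one_iff_abs_le_one x).2 hx
  linarith

lemma one_le_hh {x : ℝ} (hx : |x| ≤ 1) : 1 ≤ hh x := by
  unfold hh
  have := (sq_le_one_iff_abs_le_one x).2 hx
  rw [Real.one_le_sqrt]
  linarith

lemma hh_lip {x y : ℝ} (hx : |x| ≤ 1) (hy : |y| ≤ 1) : |hh x - hh y| ≤ |x - y| := by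
  have h1 := hh_sq hx
  have h2 := hh_sq hy
  have h3 := one_le_hh hx
  have h4 := one_le_hh hy
  have h5 : |hh x - hh y| * (hh x + hh y) = |x - y| * |x + y| := by
    rw [← abs_of_pos (show 0 < hh x + hh y by linarith), ← abs_mul, ← abs_mul, ← abs_neg]
    congr 1
    nlinarith
  have h6 : |x + y| ≤ 2 := (abs_add_le x y).trans (by linarith)
  nlinarith [abs_nonneg (hh x - hh y), abs_nonneg (x - y)]

/-- antiderivative -/
noncomputable def FF (t : ℝ) : ℝ := t * hh t / 2 + Real.arcsin (t / Real.sqrt 2)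

lemma FF_deriv {x : ℝ} (hx : |x| ≤ 1) : HasDerivAt FF (hh x) x := by
  have h1 := hh_sq hx
  have h3 := one_le_hh hx
  have hs : Real.sqrt 2 ^ 2 = 2 := Real.sq_sqrt (by norm_num)
  have hp : 0 < Real.sqrt 2 := by positivity
  have hx2 := (sq_le_one_iff_abs_le_one x).2 hx
  have hlt : (x / Real.sqrt 2) ^ 2 < 1 := by
    rw [div_pow, hs]; linarith
  have hlt' := abs_lt.1 ((sq_lt_one_iff_abs_lt_one _).1 hlt)
  have d1 : HasDerivAt hh (-(2 * x) / (2 * hh x)) x := by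
    have := ((hasDerivAt_pow 2 x).const_sub 2).sqrt (by nlinarith)
    have e : hh = fun y => Real.sqrt (2 - y ^ 2) := rfl
    rw [e]
    simpa using this
  have d2 := (Real.hasDerivAt_arcsin (x := x / Real.sqrt 2) (by linarith) (by linarith)).comp x
    ((hasDerivAt_id x).div_const (Real.sqrt 2))
  have d3 := (((hasDerivAt_id x).mul d1).div_const 2).add d2
  have e : Real.sqrt (1 - (x / Real.sqrt 2) ^ 2) = hh x / Real.sqrt 2 := by
    rw [div_pow, hs, hh, ← Real.sqrt_div' _ (by norm_num)]
    congr 1; ring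
  refine HasDerivAt.congr_deriv d3 ?_
  rw [e]
  have : hh x ≠ 0 := by linarith
  simp only [id]
  field_simp
  nlinarith

lemma FF_step {u v : ℝ} (hu : -1 ≤ u) (huv : u < v) (hv : v ≤ 1) :
    |FF v - FF u - (v - u) * hh u| ≤ (v - u) ^ 2 := by
  have ha : ∀ x ∈ Set.Icc u v, |x| ≤ 1 := fun x hx =>
    abs_le.2 ⟨hu.trans hx.1, hx.2.trans hv⟩
  obtain ⟨c, hc, e⟩ := exists_hasDerivAt_eq_slope FF hh huv
    (fun x hx => (FF_deriv (ha x hx)).continuousAt.continuousWithinAt)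
    (fun x hx => FF_deriv (ha x ⟨hx.1.le, hx.2.le⟩))
  have hp : 0 < v - u := by linarith
  rw [eq_div_iff hp.ne'] at e
  have l := hh_lip (ha c ⟨hc.1.le, hc.2.le⟩) (ha u ⟨le_rfl, huv.le⟩)
  rw [abs_of_pos (by linarith [hc.1] : 0 < c - u)] at l
  rw [← e, show hh c * (v - u) - (v - u) * hh u = (v - u) * (hh c - hh u) by ring, abs_mul,
    abs_of_pos hp, sq]
  gcongr
  linarith [hc.2]

lemma FF_val : FF 1 - FF (-1) = 1 + Real.pi / 2 := by
  have h1 : hh 1 = 1 := by unfold hh; norm_num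
  have h2 : hh (-1) = 1 := by unfold hh; norm_num
  have h3 : Real.arcsin (1 / Real.sqrt 2) = Real.pi / 4 := by
    rw [← Real.arcsin_sin (x := Real.pi / 4) (by linarith [Real.pi_pos]) (by linarith [Real.pi_pos]),
      Real.sin_pi_div_four]
    congr 1
    rw [div_eq_div_iff (by positivity) (by norm_num)]
    norm_num
  unfold FF
  rw [h1, h2, neg_div, Real.arcsin_neg, h3]
  ring

/-- sample point -/
noncomputable def uu (r n : ℕ) : ℝ := n / r - 1

lemma uu_abs {r n : ℕ} (hr : 0 < r) (hn : n ≤ 2 * r) : |uu r n| ≤ 1 := by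
  have hr' : (0 : ℝ) < r := by exact_mod_cast hr
  have hn' : (n : ℝ) ≤ 2 * r := by exact_mod_cast hn
  unfold uu
  have h1 : (n : ℝ) / r ≤ 2 := by rw [div_le_iff₀ hr']; exact hn'
  have h2 : (0 : ℝ) ≤ (n : ℝ) / r := by positivity
  rw [abs_le]; constructor <;> linarith

lemma uu_succ {r n : ℕ} : uu r (n + 1) - uu r n = 1 / r := by
  unfold uu; push_cast; ring

lemma riemann {r : ℕ} (hr : 0 < r) (m : ℕ) (hm : m ≤ 2 * r) :
    |FF (uu r m) - FF (-1) - 1 / r * ∑ n ∈ Finset.range m, hh (uu r n)| ≤ m * (1 / r) ^ 2 := by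
  induction m with
  | zero => simp [uu]
  | succ k ih =>
    have ih := ih (by omega)
    have hr' : (0 : ℝ) < 1 / r := by positivity
    have a := abs_le.1 (uu_abs hr (show k ≤ 2 * r by omega))
    have b := abs_le.1 (uu_abs hr hm)
    have e := uu_succ (r := r) (n := k)
    have s := FF_step a.1 (by linarith) b.2
    rw [e] at s
    rw [Finset.sum_range_succ]
    rw [abs_le] at *
    push_cast
    constructor <;> linarith [s.1, s.2, ih.1, ih.2]

/-- the Manhattan distance -/
noncomputable def aa (r n : ℕ) : ℝ := (circlePath r n).1 + (circlePath r n).2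

lemma aa_succ (r n : ℕ) : aa r (n + 1) = aa r n + sTerm r n := by
  simp only [aa, sTerm, circlePath]; ring

lemma key (a c : ℝ) :
    (Real.sqrt ((a - 1) ^ 2 + c ^ 2) - Real.sqrt ((a + 1) ^ 2 + c ^ 2)) *
    (Real.sqrt ((a - 1) ^ 2 + c ^ 2) + Real.sqrt ((a + 1) ^ 2 + c ^ 2)) = - (4 * a) := by
  have h1 := Real.sq_sqrt (show 0 ≤ (a - 1) ^ 2 + c ^ 2 by positivity)
  have h2 := Real.sq_sqrt (show 0 ≤ (a + 1) ^ 2 + c ^ 2 by positivity)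
  nlinarith

lemma sum_upper (a c : ℝ) :
    (Real.sqrt ((a - 1) ^ 2 + c ^ 2) + Real.sqrt ((a + 1) ^ 2 + c ^ 2)) ^ 2
      ≤ 4 * (a ^ 2 + 1 + c ^ 2) := by
  have h1 := Real.sq_sqrt (show 0 ≤ (a - 1) ^ 2 + c ^ 2 by positivity)
  have h2 := Real.sq_sqrt (show 0 ≤ (a + 1) ^ 2 + c ^ 2 by positivity)
  nlinarith [sq_nonneg (Real.sqrt ((a - 1) ^ 2 + c ^ 2) - Real.sqrt ((a + 1) ^ 2 + c ^ 2))]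

lemma sum_lower (a c : ℝ) : 4 * (a ^ 2 + c ^ 2) ≤
    (Real.sqrt ((a - 1) ^ 2 + c ^ 2) + Real.sqrt ((a + 1) ^ 2 + c ^ 2)) ^ 2 := by
  have h1 := Real.sq_sqrt (show 0 ≤ (a - 1) ^ 2 + c ^ 2 by positivity)
  have h2 := Real.sq_sqrt (show 0 ≤ (a + 1) ^ 2 + c ^ 2 by positivity)
  have h3 : (a ^ 2 + c ^ 2) - 1 ≤
      Real.sqrt ((a - 1) ^ 2 + c ^ 2) * Real.sqrt ((a + 1) ^ 2 + c ^ 2) := by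
    rw [← Real.sqrt_mul (by positivity)]
    apply Real.le_sqrt_of_sq_le
    nlinarith [sq_nonneg c]
  nlinarith

lemma factor (r a c : ℝ) (ha : 0 < a) (hr : 0 < r) :
    ∃ S : ℝ, 0 < S ∧ 4 * (a ^ 2 + c ^ 2) ≤ S ^ 2 ∧ S ^ 2 ≤ 4 * (a ^ 2 + 1 + c ^ 2) ∧
    (a + r / Real.sqrt 2 *
      (Real.sqrt ((a - 1) ^ 2 + c ^ 2) - Real.sqrt ((a + 1) ^ 2 + c ^ 2)))
      * S = a * (S - 2 * Real.sqrt 2 * r) := by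
  have hS : 0 < Real.sqrt ((a - 1) ^ 2 + c ^ 2) + Real.sqrt ((a + 1) ^ 2 + c ^ 2) := by
    positivity
  refine ⟨_, hS, sum_lower a c, sum_upper a c, ?_⟩
  have hs : Real.sqrt 2 ^ 2 = 2 := Real.sq_sqrt (by norm_num)
  have hp : 0 < Real.sqrt 2 := by positivity
  rw [add_mul, mul_assoc, key]
  have : r / Real.sqrt 2 = r * Real.sqrt 2 / 2 := by
    rw [div_eq_div_iff hp.ne' (by norm_num)]; nlinarith
  rw [this]; ring

lemma sTerm_cases (r n : ℕ) : sTerm r n = 1 ∨ sTerm r n = -1 := by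
  unfold sTerm sStep sgn
  split_ifs <;> simp

lemma sTerm_up (r n : ℕ) (hr : 0 < r) (ha : 0 < aa r n)
    (h : aa r n ^ 2 + 1 + ((r : ℝ) - n - 1) ^ 2 ≤ 2 * (r : ℝ) ^ 2) : sTerm r n = 1 := by
  have hr' : (0 : ℝ) < r := by exact_mod_cast hr
  obtain ⟨S, hS, h1, h2, e⟩ := factor r (aa r n) ((r : ℝ) - n - 1) ha hr'
  have hs : Real.sqrt 2 ^ 2 = 2 := Real.sq_sqrt (by norm_num)
  have : S ≤ 2 * Real.sqrt 2 * r := by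
    apply le_of_sq_le_sq _ (by positivity)
    rw [mul_pow, mul_pow, hs]; linarith
  unfold sTerm sStep sgn
  rw [if_pos]
  · simp
  · change (aa r n + _ ) ≤ 0
    refine nonpos_of_mul_nonpos_left (b := S) ?_ hS
    refine e.trans_le ?_
    exact mul_nonpos_of_nonneg_of_nonpos ha.le (by linarith)

lemma sTerm_down (r n : ℕ) (hr : 0 < r) (ha : 0 < aa r n)
    (h : 2 * (r : ℝ) ^ 2 < aa r n ^ 2 + ((r : ℝ) - n - 1) ^ 2) : sTerm r n = -1 := by
  have hr' : (0 : ℝ) < r := by exact_mod_cast hr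
  obtain ⟨S, hS, h1, h2, e⟩ := factor r (aa r n) ((r : ℝ) - n - 1) ha hr'
  have hs : Real.sqrt 2 ^ 2 = 2 := Real.sq_sqrt (by norm_num)
  have : 2 * Real.sqrt 2 * r < S := by
    apply lt_of_pow_lt_pow_left₀ 2 hS.le
    rw [mul_pow, mul_pow, hs]; linarith
  unfold sTerm sStep sgn
  rw [if_neg]
  · change ¬ (aa r n + _ ) ≤ 0
    rw [not_le]
    refine pos_of_mul_pos_left (b := S) ?_ hS.le
    refine lt_of_lt_of_eq ?_ e.symm
    exact mul_pos ha (by linarith)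

lemma track {r : ℕ} (hr : 3 ≤ r) (n : ℕ) (hn : n ≤ 2 * r) :
    |aa r n - r * hh (uu r n)| ≤ 2 := by
  have hr' : (3 : ℝ) ≤ r := by exact_mod_cast hr
  have hr0 : (0 : ℝ) < r := by linarith
  induction n with
  | zero =>
    have : hh (-1) = 1 := by unfold hh; norm_num
    simp [aa, circlePath, uu, this]
  | succ k ih =>
    have ih := abs_le.1 (ih (by omega))
    have uk := uu_abs (show 0 < r by omega) (show k ≤ 2 * r by omega)
    have uk1 := uu_abs (show 0 < r by omega) hn
    have l := hh_lip uk1 uk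
    rw [uu_succ, abs_of_pos (show (0 : ℝ) < 1 / r by positivity), le_div_iff₀ hr0] at l
    have l' : |(r : ℝ) * hh (uu r (k + 1)) - r * hh (uu r k)| ≤ 1 := by
      rw [← mul_sub, abs_mul, abs_of_pos hr0]; linarith
    have l' := abs_le.1 l'
    have g1 := mul_le_mul_of_nonneg_left (one_le_hh uk) hr0.le
    have g2 := mul_le_mul_of_nonneg_left (one_le_hh uk1) hr0.le
    have sq : ((r : ℝ) * hh (uu r (k + 1))) ^ 2 = 2 * (r : ℝ) ^ 2 - ((r : ℝ) - k - 1) ^ 2 := by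
      rw [mul_pow, hh_sq uk1, uu]
      push_cast
      field_simp
      ring
    have ha : 0 < aa r k := by linarith
    generalize (r : ℝ) * hh (uu r (k + 1)) = G at *
    rw [aa_succ, abs_le]
    by_cases c1 : G < aa r k
    · rw [sTerm_down r k (by omega) ha (by nlinarith)]
      constructor <;> linarith
    · by_cases c2 : aa r k ≤ G - 1
      · rw [sTerm_up r k (by omega) ha (by nlinarith)]
        constructor <;> linarith
      · rcases sTerm_cases r k with h | h <;> rw [h] <;> constructor <;> linarith

lemma final_bound {r : ℕ} (hr : 3 ≤ r) :
    |1 / (8 * (r : ℝ) ^ 2) * ∑ n ∈ Finset.range (2 * r), aa r n - (Real.pi / 16 + 1 / 8)|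
      ≤ 1 / (r : ℝ) := by
  have hr' : (3 : ℝ) ≤ r := by exact_mod_cast hr
  have hr0 : (0 : ℝ) < r := by linarith
  have h1 := riemann (show 0 < r by omega) (2 * r) le_rfl
  have e : uu r (2 * r) = 1 := by unfold uu; push_cast; field_simp; norm_num
  rw [e, FF_val] at h1
  have h2 : |∑ n ∈ Finset.range (2 * r), aa r n
      - r * ∑ n ∈ Finset.range (2 * r), hh (uu r n)| ≤ 4 * r := by
    rw [Finset.mul_sum, ← Finset.sum_sub_distrib]
    refine (Finset.abs_sum_le_sum_abs _ _).trans ?_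
    refine (Finset.sum_le_sum (g := fun _ => (2 : ℝ)) fun i hi =>
      track hr i (Finset.mem_range.1 hi).le).trans ?_
    simp; linarith
  generalize ∑ n ∈ Finset.range (2 * r), aa r n = A at *
  generalize ∑ n ∈ Finset.range (2 * r), hh (uu r n) = B at *
  have i1 : (((2 * r : ℕ) : ℝ)) * (1 / (r : ℝ)) ^ 2 = 2 * (1 / r) := by
    push_cast; field_simp
  rw [i1] at h1
  have h3 : |1 / (8 * (r : ℝ) ^ 2) * (A - r * B)| ≤ 1 / 2 * (1 / (r : ℝ)) := by
    rw [abs_mul, abs_of_pos (by positivity)]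
    calc _ ≤ 1 / (8 * (r : ℝ) ^ 2) * (4 * r) := by gcongr
      _ = _ := by field_simp; norm_num
  have i2 : 1 / (8 * (r : ℝ) ^ 2) * (A - r * B) =
      1 / (8 * (r : ℝ) ^ 2) * A - 1 / 8 * (1 / r * B) := by field_simp
  rw [i2] at h3
  have : 0 < 1 / (r : ℝ) := by positivity
  rw [abs_le] at *
  constructor <;> linarith [h1.1, h1.2, h3.1, h3.2]

/-- Proposition: the arithmetic mean
`M(r) = (1/(8r²)) · ∑_{n=0}^{2r-1} aₙ` of the values `1/πₙ = aₙ/(4r)`, where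
`aₙ = xₙ + yₙ` is the Manhattan distance of the `n`-th point of the signum
circle path of radius `r` to the origin, converges to `π/16 + 1/8`. -/
theorem arithmeticMean_inv_pi_tendsto :
    Filter.Tendsto (fun r : ℕ =>
      1 / (8 * (r : ℝ) ^ 2) * ∑ n ∈ Finset.range (2 * r),
        ((circlePath r n).1 + (circlePath r n).2))
      Filter.atTop (nhds (Real.pi / 16 + 1 / 8)) := by
  have h := tendsto_one_div_atTop_nhds_zero_nat (𝕜 := ℝ)
  rw [tendsto_iff_norm_sub_tendsto_zero]
  refine squeeze_zero' (Eventually.of_forall fun _ => norm_nonneg _) ?_ h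
  filter_upwards [eventually_ge_atTop 3] with r hr
  exact final_bound hr
end

section
/- The sequence of real numbers r ↦ (1/(8r²)) · ( r + Σ_{n=1}^{2r−1} √(r² + 2nr − n²) ), indexed by integers r ≥ 1, converges to π/16 + 1/8 as r → ∞. -/
open Filter Finset Real

lemma aux_deriv (x : ℝ) (h0 : 0 ≤ x) (h2 : x ≤ 2) :
    HasDerivAt (fun x : ℝ => (x - 1) * √(1 + 2 * x - x ^ 2) / 2 + arcsin ((x - 1) / √2))
      (√(1 + 2 * x - x ^ 2)) x := by
  have hq : 1 ≤ 1 + 2 * x - x ^ 2 := by nlinarith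
  have hs2 : (0:ℝ) < √2 := by positivity
  have hs2' : √2 ^ 2 = (2:ℝ) := Real.sq_sqrt (by norm_num)
  have hsp : 0 < √(1 + 2 * x - x ^ 2) := Real.sqrt_pos.2 (by linarith)
  have hss : √(1 + 2 * x - x ^ 2) ^ 2 = 1 + 2 * x - x ^ 2 := Real.sq_sqrt (by linarith)
  have hlt : ((x - 1) / √2) ^ 2 < 1 := by
    rw [div_pow, hs2', div_lt_one (by norm_num)]; nlinarith
  have habs := abs_lt.1 ((sq_lt_one_iff_abs_lt_one _).1 hlt)
  have e1 : HasDerivAt (fun x : ℝ => 1 + 2 * x - x ^ 2) (2 - 2 * x) x := by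
    have := (((hasDerivAt_id x).const_mul 2).const_add 1).sub ((hasDerivAt_id x).pow 2)
    refine this.congr_deriv ?_
    norm_num
  have e2 := e1.sqrt (by linarith)
  have e3 := ((((hasDerivAt_id x).sub_const 1).mul e2).div_const 2)
  have e4 := (Real.hasDerivAt_arcsin (ne_of_gt habs.1) (ne_of_lt habs.2)).comp x
    (((hasDerivAt_id x).sub_const 1).div_const (√2))
  have e5 := e3.add e4
  have hk : √(1 - ((x - 1) / √2) ^ 2) = √(1 + 2 * x - x ^ 2) / √2 := by
    rw [← Real.sqrt_div (by linarith), div_pow, hs2']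
    congr 1; ring
  refine e5.congr_deriv ?_
  simp only [id]
  rw [hk]
  field_simp
  nlinarith

lemma aux_lip (a b : ℝ) (ha : 0 ≤ a) (ha2 : a ≤ 2) (hb : 0 ≤ b) (hb2 : b ≤ 2) :
    |√(1 + 2 * a - a ^ 2) - √(1 + 2 * b - b ^ 2)| ≤ |a - b| := by
  have h1 : 1 ≤ √(1 + 2 * a - a ^ 2) := Real.one_le_sqrt.2 (by nlinarith)
  have h2 : 1 ≤ √(1 + 2 * b - b ^ 2) := Real.one_le_sqrt.2 (by nlinarith)
  have s1 : √(1 + 2 * a - a ^ 2) ^ 2 = 1 + 2 * a - a ^ 2 := Real.sq_sqrt (by nlinarith)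
  have s2 : √(1 + 2 * b - b ^ 2) ^ 2 = 1 + 2 * b - b ^ 2 := Real.sq_sqrt (by nlinarith)
  set A := √(1 + 2 * a - a ^ 2)
  set B := √(1 + 2 * b - b ^ 2)
  have key : |A - B| * (A + B) = |a - b| * |2 - a - b| := by
    rw [← abs_of_pos (show 0 < A + B by linarith), ← abs_mul, ← abs_mul]
    congr 1
    linear_combination s1 - s2
  have h3 : |2 - a - b| ≤ 2 := abs_le.2 ⟨by linarith, by linarith⟩
  nlinarith [abs_nonneg (A - B), abs_nonneg (a - b)]

lemma aux_step (a b : ℝ) (ha : 0 ≤ a) (hab : a < b) (hb : b ≤ 2) (F : ℝ → ℝ)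
    (hF : ∀ x, 0 ≤ x → x ≤ 2 → HasDerivAt F (√(1 + 2 * x - x ^ 2)) x) :
    |(b - a) * √(1 + 2 * a - a ^ 2) - (F b - F a)| ≤ (b - a) ^ 2 := by
  obtain ⟨c, ⟨hc1, hc2⟩, hc⟩ := exists_hasDerivAt_eq_slope F
    (fun x => √(1 + 2 * x - x ^ 2)) hab
    (fun x hx => (hF x (ha.trans hx.1) (hx.2.trans hb)).continuousAt.continuousWithinAt)
    (fun x hx => hF x (ha.trans hx.1.le) (hx.2.le.trans hb))
  have hba : 0 < b - a := by linarith
  rw [eq_div_iff hba.ne'] at hc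
  rw [← hc, mul_comm (b - a), ← sub_mul, abs_mul, abs_of_pos hba, sq (b - a)]
  have := aux_lip a c ha (by linarith) (by linarith) (by linarith)
  have h4 : |a - c| ≤ b - a := abs_le.2 ⟨by linarith, by linarith⟩
  exact mul_le_mul_of_nonneg_right (this.trans h4) hba.le

lemma aux_bound (r : ℕ) (hr : 1 ≤ r) :
    |1 / (8 * (r : ℝ) ^ 2) * ((r : ℝ) + ∑ n ∈ Finset.Icc 1 (2 * r - 1),
        Real.sqrt ((r : ℝ) ^ 2 + 2 * n * r - n ^ 2)) - (Real.pi / 16 + 1 / 8)|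
      ≤ 1 / 4 * (1 / (r : ℝ)) := by
  have hr0 : (0:ℝ) < r := by exact_mod_cast hr
  set F : ℝ → ℝ := fun x : ℝ => (x - 1) * √(1 + 2 * x - x ^ 2) / 2 + arcsin ((x - 1) / √2)
    with hFdef
  have e1 : (r : ℝ) + ∑ n ∈ Finset.Icc 1 (2 * r - 1),
        Real.sqrt ((r : ℝ) ^ 2 + 2 * n * r - n ^ 2) =
      ∑ n ∈ Finset.range (2 * r), Real.sqrt ((r : ℝ) ^ 2 + 2 * n * r - n ^ 2) := by
    have : Finset.range (2 * r) = insert 0 (Finset.Icc 1 (2 * r - 1)) := by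
      ext x; simp; omega
    rw [this, Finset.sum_insert (by simp)]
    simp
  have e2 : F 2 - F 0 = ∑ n ∈ Finset.range (2 * r), (F ((n + 1 : ℕ) / r) - F ((n : ℕ) / r)) := by
    rw [Finset.sum_range_sub (fun n : ℕ => F (n / r))]
    congr 2
    · push_cast; field_simp
    · simp
  have h4 : arcsin (1 / √2) = π / 4 := by
    have : (1 / √2 : ℝ) = sin (π / 4) := by
      rw [Real.sin_pi_div_four]
      have hs2' : √2 ^ 2 = (2:ℝ) := Real.sq_sqrt (by norm_num)
      field_simp; linarith
    rw [this, Real.arcsin_sin] <;> linarith [Real.pi_pos]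
  have e3 : F 2 - F 0 = 1 + π / 2 := by
    have : (0 - 1 : ℝ) / √2 = - (1 / √2) := by ring
    simp only [hFdef]
    rw [this, Real.arcsin_neg, show (2 - 1 : ℝ) / √2 = 1 / √2 by norm_num, h4]
    norm_num
    ring
  have e4 : ∀ n : ℕ, √((r : ℝ) ^ 2 + 2 * n * r - n ^ 2) =
      r * √(1 + 2 * (n / r : ℝ) - (n / r : ℝ) ^ 2) := by
    intro n
    have : (r : ℝ) ^ 2 + 2 * n * r - n ^ 2 =
        (r : ℝ) ^ 2 * (1 + 2 * (n / r : ℝ) - (n / r : ℝ) ^ 2) := by field_simp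
    rw [this, Real.sqrt_mul (by positivity), Real.sqrt_sq hr0.le]
  have e5 : 1 / (8 * (r : ℝ) ^ 2) * ((r : ℝ) + ∑ n ∈ Finset.Icc 1 (2 * r - 1),
        Real.sqrt ((r : ℝ) ^ 2 + 2 * n * r - n ^ 2)) - (Real.pi / 16 + 1 / 8) =
      1 / 8 * ∑ n ∈ Finset.range (2 * r),
        (1 / r * √(1 + 2 * (n / r : ℝ) - (n / r : ℝ) ^ 2)
          - (F ((n + 1 : ℕ) / r) - F ((n : ℕ) / r))) := by
    rw [Finset.sum_sub_distrib, ← e2, e3, e1, Finset.sum_congr rfl (fun n _ => e4 n),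
      ← Finset.mul_sum, ← Finset.mul_sum]
    field_simp
    ring
  rw [e5, abs_mul, abs_of_pos (by norm_num : (0:ℝ) < 1 / 8)]
  have e6 : |∑ n ∈ Finset.range (2 * r),
        (1 / r * √(1 + 2 * (n / r : ℝ) - (n / r : ℝ) ^ 2)
          - (F ((n + 1 : ℕ) / r) - F ((n : ℕ) / r)))| ≤
      ∑ n ∈ Finset.range (2 * r), (1 / r : ℝ) ^ 2 := by
    refine (Finset.abs_sum_le_sum_abs _ _).trans (Finset.sum_le_sum fun n hn => ?_)
    have hn' : ((n + 1 : ℕ) : ℝ) ≤ 2 * r := by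
      exact_mod_cast Finset.mem_range.1 hn
    have hd : ((n + 1 : ℕ) : ℝ) / r - n / r = 1 / r := by push_cast; ring
    have := aux_step (n / r) ((n + 1 : ℕ) / r) (by positivity)
      (by have : (0:ℝ) < 1 / r := by positivity
          linarith)
      ((div_le_iff₀ hr0).2 hn') F aux_deriv
    rwa [hd] at this
  rw [Finset.sum_const, Finset.card_range, nsmul_eq_mul] at e6
  have e7 : ((2 * r : ℕ) : ℝ) * (1 / r : ℝ) ^ 2 = 2 * (1 / r) := by
    push_cast; field_simp
  linarith

/-- the sequence
`r ↦ (1/(8r²)) · (r + ∑_{n=1}^{2r-1} √(r² + 2nr - n²))` converges to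
`π/16 + 1/8`. -/
theorem asymptotic_arithmeticMean_inv_pi_tendsto :
    Filter.Tendsto (fun r : ℕ =>
      1 / (8 * (r : ℝ) ^ 2) * ((r : ℝ) + ∑ n ∈ Finset.Icc 1 (2 * r - 1),
        Real.sqrt ((r : ℝ) ^ 2 + 2 * n * r - n ^ 2)))
      Filter.atTop (nhds (Real.pi / 16 + 1 / 8)) := by
  rw [tendsto_iff_dist_tendsto_zero]
  have h : Tendsto (fun r : ℕ => 1 / 4 * (1 / (r : ℝ))) atTop (nhds 0) := by
    simpa using (tendsto_one_div_atTop_nhds_zero_nat (𝕜 := ℝ)).const_mul (1 / 4 : ℝ)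
  refine squeeze_zero' (Eventually.of_forall fun _ => dist_nonneg) ?_ h
  filter_upwards [eventually_ge_atTop 1] with r hr
  rw [Real.dist_eq]
  exact aux_bound r hr
end
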